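/- arXiv:0805.0817 — 2 statements merged into one kernel-verified Lean document; each statement's English description precedes it below -/
import Mathlib

section
/- For each positive integer n and every real number m ≠ 0, the sum over all ordered trees T with n vertices of the quantity w(T) · ∏_{v ∈ T} 1/(h_v · m^{h_v - 1}) equals 1/n!, where w(T) = ∏_{v ∈ T} C(m, c_v), C(m, k) denotes the generalized binomial coefficient m(m-1)⋯(m-k+1)/k!, c_v is the number of children of v, and h_v is the hook length of v. In particular the value of the sum is independent of m. -/
/-- An ordered tree: a root together with a (possibly empty) list of ordered
subtrees, the children being linearly ordered by the list order. -/
inductive OTree : Type where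
  | node : List OTree → OTree

/-- The number of vertices of an ordered tree. -/
def OTree.size : OTree → ℕ
  | .node ts => 1 + (ts.attach.map (fun x => OTree.size x.1)).sum
decreasing_by
  simp only [OTree.node.sizeOf_spec]
  have := List.sizeOf_lt_of_mem x.2
  omega

/-- The product, over all vertices `v` of an ordered tree, of `f c_v h_v`,
where `c_v` is the number of children of `v` and `h_v` is the hook length of
`v` (the number of descendants of `v` including `v` itself). -/
def OTree.prodF (f : ℕ → ℕ → ℝ) : OTree → ℝ
  | .node ts => f ts.length (OTree.size (.node ts)) *
      (ts.attach.map (fun x => OTree.prodF f x.1)).prod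
decreasing_by
  simp only [OTree.node.sizeOf_spec]
  have := List.sizeOf_lt_of_mem x.2
  omega

/-- The generalized binomial coefficient `C(m,k) = m(m-1)⋯(m-k+1)/k!`. -/
noncomputable def genChoose (m : ℝ) (k : ℕ) : ℝ :=
  (∏ i ∈ Finset.range k, (m - i)) / Nat.factorial k

/-!
Let `A` be the generating function of ordered trees by number of vertices, each tree `T` weighted
by `∏ v, f c_v h_v`. A forest of `k` trees with `n` vertices in total is counted by the `n`-th
coefficient of `A ^ k`, so removing the root gives
`[xⁿ⁺¹] A = ∑ k, f k (n + 1) * [xⁿ] A ^ k`, and this recurrence determines `A`.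
For `f k (n + 1) = C(m, k) / ((n + 1) * mⁿ)` it is solved by `A = exp x - 1`, because
`∑ k, C(m, k) * (exp x - 1) ^ k = exp (m * x)`.
-/

section PowerSeries

open PowerSeries

theorem coeff_pow_congr {R : Type*} [Semiring R] {φ ψ : R⟦X⟧} {n : ℕ}
    (h : ∀ i ≤ n, coeff i φ = coeff i ψ) (k : ℕ) : coeff n (φ ^ k) = coeff n (ψ ^ k) := by
  suffices ∀ i ≤ n, coeff i (φ ^ k) = coeff i (ψ ^ k) from this n le_rfl
  induction k with
  | zero => simp
  | succ k ih =>
    intro i hi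
    simp only [pow_succ, coeff_mul]
    refine Finset.sum_congr rfl fun p hp => ?_
    have hp := Finset.HasAntidiagonal.mem_antidiagonal.mp hp
    rw [ih p.1 (by omega), h p.2 (by omega)]

theorem eq_of_coeff_succ_eq_sum_coeff_pow {R : Type*} [Semiring R] {φ ψ : R⟦X⟧} (c : ℕ → ℕ → R)
    (h₀ : constantCoeff φ = constantCoeff ψ)
    (hφ : ∀ n, coeff (n + 1) φ = ∑ k ∈ Finset.range (n + 1), c k n * coeff n (φ ^ k))
    (hψ : ∀ n, coeff (n + 1) ψ = ∑ k ∈ Finset.range (n + 1), c k n * coeff n (ψ ^ k)) :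
    φ = ψ := by
  ext n
  induction n using Nat.strong_induction_on with
  | _ n ih =>
    cases n with
    | zero => simpa using h₀
    | succ n =>
      have h_pow : ∀ k, coeff n (φ ^ k) = coeff n (ψ ^ k) :=
        coeff_pow_congr fun i hi => ih i (Nat.lt_succ_of_le hi)
      simp only [hφ, hψ, h_pow]

theorem succ_mul_choose_succ {R : Type*} [CommRing R] [BinomialRing R] (r : R) (k : ℕ) :
    ((k + 1 : ℕ) : R) * Ring.choose r (k + 1) = (r - k) * Ring.choose r k := by
  have h := Ring.choose_smul_choose r (Nat.le_add_right k 1)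
  rw [Nat.choose_succ_self_right, Nat.add_sub_cancel_left, Ring.choose_one_right,
    nsmul_eq_mul] at h
  rw [h, mul_comm]

variable {A : Type*} [CommRing A] [Algebra ℚ A]

theorem coeff_exp_sub_one {n : ℕ} (hn : n ≠ 0) :
    coeff n (exp A - 1) = algebraMap ℚ A (1 / n.factorial) := by
  rw [map_sub, coeff_exp, coeff_one, if_neg hn, sub_zero]

theorem coeff_exp_sub_one_pow_eq_zero {n k : ℕ} (h : n < k) :
    coeff n ((exp A - 1) ^ k) = 0 :=
  X_pow_dvd_iff.mp (pow_dvd_pow_of_dvd (X_dvd_iff.mpr (by simp)) k) n h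

theorem succ_mul_coeff_succ_exp_sub_one_pow (n k : ℕ) :
    ((n + 1 : ℕ) : A) * coeff (n + 1) ((exp A - 1) ^ (k + 1)) =
      ((k + 1 : ℕ) : A) *
        (coeff n ((exp A - 1) ^ (k + 1)) + coeff n ((exp A - 1) ^ k)) := by
  have h_deriv : d⁄dX A ((exp A - 1) ^ (k + 1)) =
      C ((k + 1 : ℕ) : A) * ((exp A - 1) ^ (k + 1) + (exp A - 1) ^ k) := by
    rw [derivative_pow, map_sub, derivative_exp, derivative_one, map_natCast, Nat.add_sub_cancel]
    ring
  have h_coeff := congrArg (coeff n) h_deriv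
  rw [coeff_derivative, coeff_C_mul, map_add] at h_coeff
  rw [← h_coeff]
  push_cast
  ring

variable [BinomialRing A]

theorem succ_mul_sum_choose_mul_coeff_exp_sub_one_pow (m : A) (n : ℕ) :
    ((n + 1 : ℕ) : A) * ∑ k ∈ Finset.range (n + 2),
        Ring.choose m k * coeff (n + 1) ((exp A - 1) ^ k) =
      m * ∑ k ∈ Finset.range (n + 1), Ring.choose m k * coeff n ((exp A - 1) ^ k) := by
  set b : ℕ → ℕ → A := fun n k => coeff n ((exp A - 1) ^ k) with hb
  have h_shift : ∑ k ∈ Finset.range (n + 1),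
        ((k + 1 : ℕ) : A) * Ring.choose m (k + 1) * b n (k + 1) =
      ∑ k ∈ Finset.range (n + 1), (k : A) * Ring.choose m k * b n k := by
    have h_last : b n (n + 1) = 0 := coeff_exp_sub_one_pow_eq_zero n.lt_succ_self
    have h := Finset.sum_range_succ' (fun k => (k : A) * Ring.choose m k * b n k) (n + 1)
    simpa only [Finset.sum_range_succ _ (n + 1), h_last, mul_zero, add_zero, Nat.cast_zero,
      zero_mul] using h.symm
  calc ((n + 1 : ℕ) : A) * ∑ k ∈ Finset.range (n + 2), Ring.choose m k * b (n + 1) k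
      = ∑ k ∈ Finset.range (n + 1),
          Ring.choose m (k + 1) * (((n + 1 : ℕ) : A) * b (n + 1) (k + 1)) := by
        have h_first : b (n + 1) 0 = 0 := by simp [hb, coeff_one]
        rw [Finset.sum_range_succ', h_first, mul_zero, add_zero, Finset.mul_sum]
        exact Finset.sum_congr rfl fun k _ => mul_left_comm _ _ _
    _ = ∑ k ∈ Finset.range (n + 1), ((k + 1 : ℕ) : A) * Ring.choose m (k + 1) * b n (k + 1) +
          ∑ k ∈ Finset.range (n + 1), ((k + 1 : ℕ) : A) * Ring.choose m (k + 1) * b n k := by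
        rw [← Finset.sum_add_distrib]
        refine Finset.sum_congr rfl fun k _ => ?_
        rw [succ_mul_coeff_succ_exp_sub_one_pow]
        ring
    _ = m * ∑ k ∈ Finset.range (n + 1), Ring.choose m k * b n k := by
        rw [h_shift, ← Finset.sum_add_distrib, Finset.mul_sum]
        refine Finset.sum_congr rfl fun k _ => ?_
        rw [succ_mul_choose_succ]
        ring

-- The coefficient form of `(1 + (exp x - 1)) ^ m = exp (m * x)`.
theorem factorial_mul_sum_choose_mul_coeff_exp_sub_one_pow (m : A) (n : ℕ) :
    (n.factorial : A) * ∑ k ∈ Finset.range (n + 1),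
      Ring.choose m k * coeff n ((exp A - 1) ^ k) = m ^ n := by
  induction n with
  | zero => simp
  | succ n ih =>
    rw [Nat.factorial_succ, mul_comm (n + 1), Nat.cast_mul, mul_assoc,
      succ_mul_sum_choose_mul_coeff_exp_sub_one_pow, mul_left_comm, ih, pow_succ']

end PowerSeries

theorem genChoose_eq_choose (m : ℝ) (k : ℕ) : genChoose m k = Ring.choose m k := by
  induction k with
  | zero => simp [genChoose]
  | succ k ih =>
    have h_succ : genChoose m (k + 1) = (m - k) * genChoose m k / (k + 1 : ℕ) := by
      rw [genChoose, genChoose, Finset.prod_range_succ, Nat.factorial_succ, Nat.cast_mul]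
      field_simp
    rw [h_succ, ih, ← succ_mul_choose_succ, mul_div_cancel_left₀ _ (by positivity)]

namespace OTree

open PowerSeries

theorem size_node (ts : List OTree) : size (node ts) = 1 + (ts.map size).sum := by
  rw [size, List.attach_map_val (f := size)]

theorem size_pos (T : OTree) : 0 < T.size := by
  cases T with
  | node ts => rw [size_node]; omega

theorem length_le_sum_map_size (l : List OTree) : l.length ≤ (l.map size).sum := by
  have h_pos : ∀ h ∈ l.map size, 1 ≤ h := List.forall_mem_map.mpr fun T _ => size_pos T
  simpa only [List.length_map] using List.length_le_sum_of_one_le _ h_pos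

theorem prodF_node (f : ℕ → ℕ → ℝ) (ts : List OTree) :
    prodF f (node ts) = f ts.length (size (node ts)) * (ts.map (prodF f)).prod := by
  rw [prodF, List.attach_map_val (f := prodF f)]

theorem prodF_mul_prodF (f g : ℕ → ℕ → ℝ) :
    ∀ T : OTree, T.prodF f * T.prodF g = T.prodF fun c h => f c h * g c h
  | node ts => by
    have h_children : (ts.map fun T => T.prodF f * T.prodF g) =
        ts.map (prodF fun c h => f c h * g c h) :=
      List.map_congr_left fun T _ => prodF_mul_prodF f g T
    rw [prodF_node, prodF_node, prodF_node, ← h_children, List.prod_map_mul]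
    ring

theorem finite_setOf_sum_map_size_eq (n : ℕ) :
    {l : List OTree | (l.map size).sum = n}.Finite := by
  induction n using Nat.strong_induction_on with
  | _ n ih =>
    have h_finite : (⋃ i ∈ Set.Iio n, ⋃ j ∈ Set.Iio n, Set.image2 (fun a b => node a :: b)
        {l | (l.map size).sum = i} {l | (l.map size).sum = j}).Finite :=
      (Set.finite_Iio n).biUnion fun i hi => (Set.finite_Iio n).biUnion fun j hj =>
        (ih i hi).image2 _ (ih j hj)
    refine (h_finite.insert []).subset fun l hl => ?_
    match l, hl with
    | [], _ => exact Set.mem_insert _ _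
    | node a :: b, hl =>
      have h_size : 1 + (a.map size).sum + (b.map size).sum = n := by
        simpa [size_node] using hl
      refine Set.mem_insert_of_mem _ ?_
      simp only [Set.mem_iUnion]
      exact ⟨_, Set.mem_Iio.mpr (by omega), _, Set.mem_Iio.mpr (by omega), a, rfl, b, rfl, rfl⟩

theorem finite_setOf_size_eq (n : ℕ) : {T : OTree | T.size = n}.Finite :=
  ((finite_setOf_sum_map_size_eq n).preimage (List.singleton_injective.injOn)).subset
    fun T hT => by simpa using hT

/-- The ordered trees with `n` vertices. -/
noncomputable def trees (n : ℕ) : Finset OTree :=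
  (finite_setOf_size_eq n).toFinset

/-- The ordered forests consisting of `k` ordered trees with `n` vertices in total. -/
noncomputable def forests (k n : ℕ) : Finset (List OTree) :=
  {l ∈ (finite_setOf_sum_map_size_eq n).toFinset | l.length = k}

@[simp]
theorem mem_trees {n : ℕ} {T : OTree} : T ∈ trees n ↔ T.size = n := by
  simp [trees]

@[simp]
theorem mem_forests {k n : ℕ} {l : List OTree} :
    l ∈ forests k n ↔ (l.map size).sum = n ∧ l.length = k := by
  simp [forests]

section Sums

variable {M : Type*} [AddCommMonoid M]

theorem sum_trees_succ (F : OTree → M) (n : ℕ) :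
    ∑ T ∈ trees (n + 1), F T =
      ∑ k ∈ Finset.range (n + 1), ∑ l ∈ forests k n, F (node l) := by
  rw [Finset.sum_sigma']
  symm
  refine Finset.sum_nbij (fun x => node x.2) ?_ ?_ ?_ fun _ _ => rfl
  · rintro ⟨k, l⟩ hl
    obtain ⟨-, h_size, -⟩ := by simpa using hl
    simp only [mem_trees, size_node, h_size, add_comm]
  · rintro ⟨k, l⟩ hl ⟨k', l'⟩ hl' h_eq
    obtain ⟨-, -, rfl⟩ := by simpa using hl
    obtain ⟨-, -, rfl⟩ := by simpa using hl'
    obtain rfl : l = l' := by simpa using h_eq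
    rfl
  · rintro ⟨l⟩ hl
    have h_size : (l.map size).sum = n := by
      have := mem_trees.mp hl
      rw [size_node] at this
      omega
    have h_length := length_le_sum_map_size l
    exact ⟨⟨l.length, l⟩, by simp; omega, rfl⟩

theorem sum_forests_succ (F : List OTree → M) (k n : ℕ) :
    ∑ l ∈ forests (k + 1) n, F l =
      ∑ p ∈ Finset.HasAntidiagonal.antidiagonal n,
        ∑ T ∈ trees p.1, ∑ l ∈ forests k p.2, F (T :: l) := by
  simp only [← Finset.sum_product']
  rw [Finset.sum_sigma']
  symm
  refine Finset.sum_nbij (fun x => x.2.1 :: x.2.2) ?_ ?_ ?_ fun _ _ => rfl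
  · rintro ⟨p, T, l⟩ hx
    obtain ⟨h_antidiagonal, h_size, h_sum, h_length⟩ := by simpa using hx
    simp [h_size, h_sum, h_length, h_antidiagonal]
  · rintro ⟨⟨i, j⟩, T, l⟩ hx ⟨⟨i', j'⟩, T', l'⟩ hx' h_eq
    obtain ⟨-, rfl, rfl, -⟩ := by simpa using hx
    obtain ⟨-, rfl, rfl, -⟩ := by simpa using hx'
    obtain ⟨rfl, rfl⟩ := by simpa using h_eq
    rfl
  · intro l hl
    obtain ⟨h_sum, h_length⟩ := mem_forests.mp hl
    obtain ⟨T, l, rfl⟩ := List.exists_cons_of_length_eq_add_one h_length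
    exact ⟨⟨(T.size, (l.map size).sum), T, l⟩, by simpa using And.intro h_sum h_length, rfl⟩

end Sums

/-- The ordinary generating function of ordered trees by number of vertices, where the tree `T`
has weight `w T`. -/
noncomputable def genFun {R : Type*} [Semiring R] (w : OTree → R) : R⟦X⟧ :=
  PowerSeries.mk fun n => ∑ T ∈ trees n, w T

section GenFun

variable {R : Type*} [Semiring R] (w : OTree → R)

theorem coeff_genFun (n : ℕ) : coeff n (genFun w) = ∑ T ∈ trees n, w T :=
  coeff_mk _ _

theorem constantCoeff_genFun : constantCoeff (genFun w) = 0 := by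
  rw [← coeff_zero_eq_constantCoeff_apply, coeff_genFun]
  exact Finset.sum_eq_zero fun T hT => absurd (mem_trees.mp hT) (size_pos T).ne'

theorem coeff_genFun_pow (k n : ℕ) :
    coeff n (genFun w ^ k) = ∑ l ∈ forests k n, (l.map w).prod := by
  induction k generalizing n with
  | zero =>
    have h_forests : forests 0 n = if n = 0 then {[]} else ∅ := by
      ext l
      split_ifs with hn <;> cases l <;> simp [hn, eq_comm]
    rw [pow_zero, coeff_one, h_forests]
    split_ifs <;> simp
  | succ k ih =>
    simp only [pow_succ', coeff_mul, ih, coeff_genFun, sum_forests_succ, Finset.sum_mul_sum,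
      List.map_cons, List.prod_cons]

theorem tsum_size_eq_eq_coeff_genFun [TopologicalSpace R] (n : ℕ) :
    ∑' T : {T : OTree // T.size = n}, w T = coeff n (genFun w) := by
  rw [coeff_genFun, ← Finset.tsum_subtype]
  exact (Equiv.subtypeEquivRight fun _ => mem_trees.symm).tsum_eq fun T : trees n => w T

end GenFun

theorem coeff_succ_genFun_prodF (f : ℕ → ℕ → ℝ) (n : ℕ) :
    coeff (n + 1) (genFun (prodF f)) =
      ∑ k ∈ Finset.range (n + 1), f k (n + 1) * coeff n (genFun (prodF f) ^ k) := by
  simp only [coeff_genFun, coeff_genFun_pow, sum_trees_succ, Finset.mul_sum]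
  refine Finset.sum_congr rfl fun k _ => Finset.sum_congr rfl fun l hl => ?_
  obtain ⟨h_size, h_length⟩ := mem_forests.mp hl
  rw [prodF_node, size_node, h_size, h_length, add_comm]

theorem genFun_prodF_eq_of_coeff_succ {f : ℕ → ℕ → ℝ} {φ : ℝ⟦X⟧} (h₀ : constantCoeff φ = 0)
    (hφ : ∀ n, coeff (n + 1) φ = ∑ k ∈ Finset.range (n + 1), f k (n + 1) * coeff n (φ ^ k)) :
    genFun (prodF f) = φ :=
  eq_of_coeff_succ_eq_sum_coeff_pow (fun k n => f k (n + 1))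
    ((constantCoeff_genFun _).trans h₀.symm) (coeff_succ_genFun_prodF f) hφ

theorem genFun_prodF_genChoose_eq_exp_sub_one {m : ℝ} (hm : m ≠ 0) :
    genFun (prodF fun c h => genChoose m c * (1 / ((h : ℝ) * m ^ (h - 1)))) = exp ℝ - 1 := by
  refine genFun_prodF_eq_of_coeff_succ (by simp) fun n => ?_
  have h_sum := factorial_mul_sum_choose_mul_coeff_exp_sub_one_pow m n
  have h_factor : ∀ k, genChoose m k * (1 / (((n + 1 : ℕ) : ℝ) * m ^ (n + 1 - 1))) *
      coeff n ((exp ℝ - 1) ^ k) =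
        1 / (((n + 1 : ℕ) : ℝ) * m ^ n) * (Ring.choose m k * coeff n ((exp ℝ - 1) ^ k)) := by
    intro k
    rw [genChoose_eq_choose, Nat.add_sub_cancel]
    ring
  simp only [h_factor, ← Finset.mul_sum]
  rw [eq_div_of_mul_eq (by positivity) ((mul_comm _ _).trans h_sum),
    coeff_exp_sub_one n.succ_ne_zero, Nat.factorial_succ, eq_ratCast]
  push_cast
  field_simp

end OTree

/-- Yang's formula: for every positive integer `n` and every real `m ≠ 0`,
`∑_{T ∈ O(n)} w(T) ∏_{v ∈ T} 1/(h_v m^{h_v-1}) = 1/n!`, where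
`w(T) = ∏_{v ∈ T} C(m, c_v)`; in particular the sum is independent of `m`. -/
theorem yang_hook_length_formula (n : ℕ) (hn : 0 < n) (m : ℝ) (hm : m ≠ 0) :
    ∑' T : {T : OTree // T.size = n},
      ((T : OTree).prodF fun c _ => genChoose m c) *
        ((T : OTree).prodF fun _ h => 1 / ((h : ℝ) * m ^ (h - 1))) =
      1 / (Nat.factorial n : ℝ) := by
  simp only [OTree.prodF_mul_prodF]
  rw [OTree.tsum_size_eq_eq_coeff_genFun, OTree.genFun_prodF_genChoose_eq_exp_sub_one hm,
    coeff_exp_sub_one hn.ne']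
  simp
end

section
/- Let T̄ be a fixed infinite ordered rooted tree in which every vertex v has c̄_v children with 0 < c̄_v < ∞. Then for each positive integer n, the sum over all subtrees T of T̄ with n vertices (rooted at the root of T̄) of the product over all vertices v of T of 1/(h_v · c̄_v^{h_v - 1}) equals 1/n!, where h_v is the hook length of v computed in T and c̄_v is the number of children of v in T̄. -/
/-- We model a fixed infinite ordered rooted tree `T̄` by a function
`cb : List ℕ → ℕ` assigning to each vertex its number of children, vertices
being encoded as finite paths from the root: the root is `[]` and the
children of a vertex `p` are `p ++ [i]` for `i < cb p`.  A (finite) subtree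
of `T̄` rooted at the root of `T̄` is a finite set of vertices containing the
root and closed under taking parents. -/
def IsSubtree (cb : List ℕ → ℕ) (S : Finset (List ℕ)) : Prop :=
  [] ∈ S ∧ ∀ v ∈ S, ∀ p i, v = p ++ [i] → p ∈ S ∧ i < cb p

/-- The hook length of a vertex `v` in the subtree `S`: the number of
descendants of `v` in `S`, including `v` itself (descendants of `v` are the
vertices having `v` as a prefix). -/
def hookLen (S : Finset (List ℕ)) (v : List ℕ) : ℕ :=
  (S.filter (fun w => v <+: w)).card

/-! A nonempty parent-closed set of vertices splits into the root and one possibly empty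
parent-closed set in each of the branches at the root. Weight every vertex `v` by `x v` and let
`s v` be the sum of the weights of its children. If `W n` is the sum over the parent-closed sets `S`
with `n` vertices of `∏ v ∈ S, x v ^ h v / (h v * s v ^ (h v - 1))`, and `W_i` is the same sum for
the branch at the child `i` of the root, the splitting reads
`W (n + 1) = x [] ^ (n + 1) / ((n + 1) * s [] ^ n) * ∑ f, ∏ i, W_i (f i)`,
where `f` distributes the `n` remaining vertices among the branches. By induction
`W_i (f i) = x [i] ^ f i / (f i)!`, and the multinomial theorem collapses the sum to
`s [] ^ n / n!`. The hook length formula is the case `x = 1`, where `s v` is the number of children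
of `v`. -/

open Finset

namespace HookLength

section Multinomial

variable {ι K : Type*} [DecidableEq ι] [Semifield K] [CharZero K]

theorem sum_piAntidiag_prod_pow_div_factorial (s : Finset ι) (x : ι → K) (n : ℕ) :
    ∑ f ∈ s.piAntidiag n, ∏ i ∈ s, x i ^ f i / (f i).factorial =
      (∑ i ∈ s, x i) ^ n / n.factorial := by
  rw [sum_pow_eq_sum_piAntidiag, sum_div]
  refine sum_congr rfl fun f hf ↦ ?_
  have multinomial_mul : (∏ i ∈ s, ((f i).factorial : K)) * Nat.multinomial s f = n.factorial := by
    rw [← (mem_piAntidiag.1 hf).1]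
    exact_mod_cast Nat.multinomial_spec s f
  have prod_factorial_ne_zero : ∏ i ∈ s, ((f i).factorial : K) ≠ 0 :=
    prod_ne_zero_iff.2 fun i _ ↦ Nat.cast_ne_zero.2 (f i).factorial_ne_zero
  have factorial_ne_zero : (n.factorial : K) ≠ 0 := Nat.cast_ne_zero.2 n.factorial_ne_zero
  rw [prod_div_distrib, div_eq_div_iff prod_factorial_ne_zero factorial_ne_zero, ← multinomial_mul]
  ring

end Multinomial

section Graft

variable {c : ℕ}

/-- The inclusion of `c` copies of the vertices into the branches at a root with `c` children. -/
@[simps]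
def consEmbedding (c : ℕ) : (_ : Fin c) × List ℕ ↪ List ℕ where
  toFun v := v.1 :: v.2
  inj' := by
    rintro ⟨i, v⟩ ⟨j, w⟩ h
    obtain ⟨hij, hvw⟩ := List.cons.inj h
    exact Sigma.ext (Fin.ext hij) (heq_of_eq hvw)

/-- The tree obtained by attaching the vertex sets `t 0, …, t (c - 1)`, each of which may be empty,
as the branches of a new root. -/
def graft (t : Fin c → Finset (List ℕ)) : Finset (List ℕ) :=
  Finset.cons [] ((univ.sigma t).map (consEmbedding c)) (by simp)

/-- The branch of `S` at the child `i` of the root, with paths read from that child. -/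
noncomputable def branch (S : Finset (List ℕ)) (i : ℕ) : Finset (List ℕ) :=
  S.preimage (List.cons i) List.cons_injective.injOn

variable (t : Fin c → Finset (List ℕ)) (S : Finset (List ℕ)) (v : List ℕ)

theorem nil_mem_graft : [] ∈ graft t := mem_cons_self _ _

theorem cons_mem_graft (a : ℕ) : a :: v ∈ graft t ↔ ∃ h : a < c, v ∈ t ⟨a, h⟩ := by
  simp only [graft, mem_cons, mem_map, mem_sigma, mem_univ, true_and, consEmbedding_apply,
    List.cons.injEq, reduceCtorEq, false_or]
  constructor
  · rintro ⟨⟨i, w⟩, hw, rfl, rfl⟩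
    exact ⟨i.2, hw⟩
  · rintro ⟨h, hv⟩
    exact ⟨⟨⟨a, h⟩, v⟩, hv, rfl, rfl⟩

theorem mem_branch (i : ℕ) : v ∈ branch S i ↔ i :: v ∈ S := mem_preimage

theorem branch_graft (i : Fin c) : branch (graft t) i = t i := by
  ext v
  simp [mem_branch, cons_mem_graft]

@[to_additive]
theorem prod_graft {M : Type*} [CommMonoid M] (g : List ℕ → M) :
    ∏ v ∈ graft t, g v = g [] * ∏ i, ∏ v ∈ t i, g ((i : ℕ) :: v) := by
  simp [graft, prod_sigma]

theorem card_graft : #(graft t) = ∑ i, #(t i) + 1 := by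
  simp only [card_eq_sum_ones, sum_graft, add_comm]

theorem hookLen_nil : hookLen S [] = #S := by
  simp [hookLen]

theorem hookLen_graft_cons (i : Fin c) : hookLen (graft t) (i :: v) = hookLen (t i) v := by
  simp only [hookLen, card_filter, sum_graft, List.cons_prefix_cons, Fin.val_inj, ite_and]
  simp

end Graft

section ParentClosed

variable {cb : List ℕ → ℕ} {S : Finset (List ℕ)}

/-- The closure condition of `IsSubtree` alone. Unlike a subtree, a parent-closed set may be empty,
as the branches of a subtree may be. -/
def IsParentClosed (cb : List ℕ → ℕ) (S : Finset (List ℕ)) : Prop :=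
  ∀ v ∈ S, ∀ p i, v = p ++ [i] → p ∈ S ∧ i < cb p

namespace IsParentClosed

theorem mem_of_append_mem (hS : IsParentClosed cb S) (p q : List ℕ) (h : p ++ q ∈ S) : p ∈ S := by
  induction q using List.reverseRecOn with
  | nil => simpa using h
  | append_singleton q a ih => exact ih (hS _ h (p ++ q) a (by simp)).1

theorem nil_mem (hS : IsParentClosed cb S) (hne : S.Nonempty) : [] ∈ S :=
  let ⟨v, hv⟩ := hne
  hS.mem_of_append_mem [] v hv

theorem lt_of_cons_mem (hS : IsParentClosed cb S) {a : ℕ} {v : List ℕ} (h : a :: v ∈ S) :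
    a < cb [] :=
  (hS [a] (hS.mem_of_append_mem [a] v h) [] a rfl).2

theorem branch (hS : IsParentClosed cb S) (i : ℕ) :
    IsParentClosed (cb ∘ List.cons i) (branch S i) := by
  rintro _ hv p j rfl
  rw [mem_branch] at hv ⊢
  exact hS _ hv (i :: p) j rfl

theorem graft {t : Fin (cb []) → Finset (List ℕ)}
    (ht : ∀ i : Fin (cb []), IsParentClosed (cb ∘ List.cons i) (t i)) :
    IsParentClosed cb (graft t) := by
  rintro _ hv p j rfl
  cases p with
  | nil =>
    obtain ⟨hj, -⟩ := (cons_mem_graft t [] j).1 hv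
    exact ⟨nil_mem_graft t, hj⟩
  | cons a p =>
    obtain ⟨ha, hv⟩ := (cons_mem_graft t (p ++ [j]) a).1 hv
    obtain ⟨hp, hj⟩ := ht _ _ hv p j rfl
    exact ⟨(cons_mem_graft t p a).2 ⟨ha, hp⟩, hj⟩

theorem graft_branch (hS : IsParentClosed cb S) (hne : S.Nonempty) :
    HookLength.graft (fun i : Fin (cb []) ↦ HookLength.branch S i) = S := by
  ext v
  cases v with
  | nil => exact iff_of_true (nil_mem_graft _) (hS.nil_mem hne)
  | cons a v => simpa only [cons_mem_graft, mem_branch, exists_prop, and_iff_right_iff_imp]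
      using hS.lt_of_cons_mem

theorem sum_card_branch_add_one (hS : IsParentClosed cb S) (hne : S.Nonempty) :
    ∑ i : Fin (cb []), #(HookLength.branch S i) + 1 = #S := by
  rw [← card_graft, hS.graft_branch hne]

end IsParentClosed

theorem isSubtree_iff_isParentClosed (hne : S.Nonempty) : IsSubtree cb S ↔ IsParentClosed cb S :=
  ⟨And.right, fun hS ↦ ⟨hS.nil_mem hne, hS⟩⟩

theorem finite_setOf_isParentClosed_card_le (cb : List ℕ → ℕ) (n : ℕ) :
    {S | IsParentClosed cb S ∧ #S ≤ n}.Finite := by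
  induction n generalizing cb with
  | zero => exact (Set.finite_singleton ∅).subset fun S hS ↦ card_eq_zero.1 (Nat.le_zero.1 hS.2)
  | succ n ih =>
    have finite_branches := Set.Finite.pi fun i : Fin (cb []) ↦ ih (cb ∘ List.cons i)
    refine ((finite_branches.image graft).insert ∅).subset fun S ⟨hS, hcard⟩ ↦ ?_
    rcases S.eq_empty_or_nonempty with rfl | hne
    · exact Set.mem_insert _ _
    refine .inr ⟨fun i ↦ branch S i, fun i _ ↦ ⟨hS.branch i, ?_⟩, hS.graft_branch hne⟩
    have card_branch_le := single_le_sum_of_canonicallyOrdered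
      (f := fun i : Fin (cb []) ↦ #(branch S i)) (mem_univ i)
    have card_eq := hS.sum_card_branch_add_one hne
    lia

/-- The parent-closed sets with `n` vertices. For `n > 0` these are the subtrees with `n` vertices,
the set `T̄(n)`. -/
noncomputable def parentClosedSets (cb : List ℕ → ℕ) (n : ℕ) : Finset (Finset (List ℕ)) :=
  ((finite_setOf_isParentClosed_card_le cb n).subset
    fun _ (h : IsParentClosed cb _ ∧ #_ = n) ↦ ⟨h.1, h.2.le⟩).toFinset

theorem mem_parentClosedSets {n : ℕ} : S ∈ parentClosedSets cb n ↔ IsParentClosed cb S ∧ #S = n :=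
  Set.Finite.mem_toFinset _

theorem parentClosedSets_zero (cb : List ℕ → ℕ) : parentClosedSets cb 0 = {∅} := by
  ext S
  rw [mem_parentClosedSets, card_eq_zero, mem_singleton, and_iff_right_iff_imp]
  rintro rfl
  simp [IsParentClosed]

theorem sum_parentClosedSets_succ {M : Type*} [AddCommMonoid M] (cb : List ℕ → ℕ) (n : ℕ)
    (F : Finset (List ℕ) → M) :
    ∑ S ∈ parentClosedSets cb (n + 1), F S =
      ∑ f ∈ piAntidiag univ n,
        ∑ t ∈ Fintype.piFinset fun i : Fin (cb []) ↦ parentClosedSets (cb ∘ List.cons i) (f i),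
          F (graft t) := by
  have graft_branch_of_mem {S} (hS : S ∈ parentClosedSets cb (n + 1)) :
      graft (fun i : Fin (cb []) ↦ branch S i) = S := by
    rw [mem_parentClosedSets] at hS
    exact hS.1.graft_branch (card_pos.1 (by lia))
  rw [sum_sigma']
  refine sum_bij' (fun S _ ↦ ⟨fun i ↦ #(branch S i), fun i ↦ branch S i⟩) (fun y _ ↦ graft y.2)
    (fun S hS ↦ ?_) (fun y hy ↦ ?_) (fun S hS ↦ graft_branch_of_mem hS) (fun y hy ↦ ?_)
    (fun S hS ↦ congrArg F (graft_branch_of_mem hS).symm)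
  all_goals
    simp only [mem_sigma, mem_piAntidiag, Fintype.mem_piFinset, mem_parentClosedSets, mem_univ,
      implies_true, and_true] at *
  · have card_eq := hS.1.sum_card_branch_add_one (card_pos.1 (by lia))
    exact ⟨by lia, fun i ↦ hS.1.branch i⟩
  · exact ⟨.graft fun i ↦ (hy.2 i).1, by simp only [card_graft, hy]⟩
  · simp only [branch_graft, hy]

end ParentClosed

section HookWeight

variable {K : Type*} [Semifield K]

/-- The sum of the weights of the children of `p`; for `x = 1` it is the number `c̄_p` of
children. -/
def childSum (cb : List ℕ → ℕ) (x : List ℕ → K) (p : List ℕ) : K :=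
  ∑ i : Fin (cb p), x (p ++ [(i : ℕ)])

theorem childSum_one (cb : List ℕ → ℕ) (p : List ℕ) : childSum cb (1 : List ℕ → K) p = cb p := by
  simp [childSum]

/-- The hook product of `S` for vertex weights `x`; for `x = 1` it is the summand
`∏ 1 / (h_v c̄_v ^ (h_v - 1))` of the hook length formula. -/
def hookWeight (cb : List ℕ → ℕ) (x : List ℕ → K) (S : Finset (List ℕ)) : K :=
  ∏ v ∈ S, x v ^ hookLen S v / (hookLen S v * childSum cb x v ^ (hookLen S v - 1))

theorem hookWeight_graft (cb : List ℕ → ℕ) (x : List ℕ → K) {c : ℕ}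
    (t : Fin c → Finset (List ℕ)) :
    hookWeight cb x (graft t) =
      x [] ^ #(graft t) / (#(graft t) * childSum cb x [] ^ (#(graft t) - 1)) *
        ∏ i : Fin c, hookWeight (cb ∘ List.cons i) (x ∘ List.cons i) (t i) := by
  simp only [hookWeight, prod_graft, hookLen_nil, hookLen_graft_cons]
  rfl

theorem sum_hookWeight_succ (cb : List ℕ → ℕ) (x : List ℕ → K) (n : ℕ) :
    ∑ S ∈ parentClosedSets cb (n + 1), hookWeight cb x S =
      x [] ^ (n + 1) / ((n + 1) * childSum cb x [] ^ n) *
        ∑ f ∈ piAntidiag univ n, ∏ i : Fin (cb []),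
          ∑ S ∈ parentClosedSets (cb ∘ List.cons i) (f i),
            hookWeight (cb ∘ List.cons i) (x ∘ List.cons i) S := by
  rw [sum_parentClosedSets_succ, mul_sum]
  refine sum_congr rfl fun f hf ↦ ?_
  rw [prod_univ_sum, mul_sum]
  refine sum_congr rfl fun t ht ↦ ?_
  have card_graft_eq : #(graft t) = n + 1 := by
    simp only [Fintype.mem_piFinset, mem_parentClosedSets] at ht
    simp only [card_graft, ht, (mem_piAntidiag.1 hf).1]
  rw [hookWeight_graft, card_graft_eq, Nat.add_sub_cancel, Nat.cast_succ]

theorem sum_hookWeight [CharZero K] (cb : List ℕ → ℕ) (x : List ℕ → K)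
    (hx : ∀ p, childSum cb x p ≠ 0) (n : ℕ) :
    ∑ S ∈ parentClosedSets cb n, hookWeight cb x S = x [] ^ n / n.factorial := by
  induction n using Nat.strong_induction_on generalizing cb x with
  | _ n ih =>
  cases n with
  | zero => simp [parentClosedSets_zero, hookWeight]
  | succ n =>
    have sum_branch {f : Fin (cb []) → ℕ} (hf : f ∈ piAntidiag univ n) (i : Fin (cb [])) :
        ∑ S ∈ parentClosedSets (cb ∘ List.cons i) (f i),
          hookWeight (cb ∘ List.cons i) (x ∘ List.cons i) S = x [(i : ℕ)] ^ f i / (f i).factorial :=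
      have le_sum := single_le_sum_of_canonicallyOrdered (f := f) (mem_univ i)
      have sum_eq := (mem_piAntidiag.1 hf).1
      ih (f i) (by lia) _ _ fun p ↦ hx (i :: p)
    calc ∑ S ∈ parentClosedSets cb (n + 1), hookWeight cb x S
      _ = x [] ^ (n + 1) / ((n + 1) * childSum cb x [] ^ n) *
            ∑ f ∈ piAntidiag univ n, ∏ i : Fin (cb []), x [(i : ℕ)] ^ f i / (f i).factorial := by
        rw [sum_hookWeight_succ]
        congr! 3 with f hf i
        exact sum_branch hf i
      _ = x [] ^ (n + 1) / ((n + 1) * childSum cb x [] ^ n) *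
            (childSum cb x [] ^ n / n.factorial) := by
        rw [sum_piAntidiag_prod_pow_div_factorial]
        rfl
      _ = x [] ^ (n + 1) / (n + 1).factorial := by
        have root_ne_zero := hx []
        have factorial_ne_zero : (n.factorial : K) ≠ 0 := Nat.cast_ne_zero.2 n.factorial_ne_zero
        have succ_ne_zero : (n + 1 : K) ≠ 0 := Nat.cast_add_one_ne_zero n
        rw [Nat.factorial_succ, Nat.cast_mul, Nat.cast_succ]
        field_simp

end HookWeight

end HookLength

open HookLength in
theorem infinite_tree_hook_length_formula_general {K : Type*} [Semifield K] [CharZero K]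
    [TopologicalSpace K] (cb : List ℕ → ℕ) (x : List ℕ → K) (hx : ∀ p, childSum cb x p ≠ 0)
    (n : ℕ) (hn : 0 < n) :
    ∑' T : {S : Finset (List ℕ) // IsSubtree cb S ∧ S.card = n},
      ∏ v ∈ T.1, x v ^ hookLen T.1 v /
        (hookLen T.1 v * childSum cb x v ^ (hookLen T.1 v - 1)) =
      x [] ^ n / n.factorial := by
  have mem_iff (S : Finset (List ℕ)) :
      IsSubtree cb S ∧ #S = n ↔ S ∈ parentClosedSets cb n := by
    rw [mem_parentClosedSets]
    exact and_congr_left fun hS ↦ isSubtree_iff_isParentClosed (card_pos.1 (by lia))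
  rw [← sum_hookWeight cb x hx n, ← Finset.tsum_subtype]
  exact (Equiv.subtypeEquivRight mem_iff).tsum_eq
    fun T : parentClosedSets cb n ↦ hookWeight cb x T.1

/-- For a fixed infinite ordered tree `T̄` in which every vertex has a finite
positive number of children, and every positive integer `n`,
`∑_{T ∈ T̄(n)} ∏_{v ∈ T} 1/(h_v c̄_v^{h_v-1}) = 1/n!`, where the sum is over
subtrees of `T̄` with `n` vertices, `h_v` is the hook length of `v` in `T`,
and `c̄_v` is the number of children of `v` in `T̄`. -/
theorem infinite_tree_hook_length_formula (cb : List ℕ → ℕ) (hcb : ∀ x, 0 < cb x)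
    (n : ℕ) (hn : 0 < n) :
    ∑' T : {S : Finset (List ℕ) // IsSubtree cb S ∧ S.card = n},
      ∏ v ∈ T.1, (1 : ℝ) / ((hookLen T.1 v : ℝ) * (cb v : ℝ) ^ (hookLen T.1 v - 1)) =
      1 / (Nat.factorial n : ℝ) := by
  simpa [HookLength.childSum_one] using infinite_tree_hook_length_formula_general cb
    (1 : List ℕ → ℝ) (fun p ↦ by simpa [HookLength.childSum_one] using (hcb p).ne') n hn
end
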